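/- Let q be a probability distribution on [0,2π) that is invariant under the maps θ ↦ −θ and θ ↦ θ + π/2 (mod 2π), and let Q_T be the q-Kac walk of length T on ℝ^{d×d}. Let ξ be a uniform random vector in {±1}^d conditioned on ∏_{i=1}^d ξ_i = 1, independent of the walk, and let D_ξ be the diagonal matrix with diagonal ξ. If d · exp(−T/(d−1)) < 1, then the total variation distance between the law of Q_T and the law of Q_T D_ξ is at most d·exp(−T/(d−1)) / (1 − d·exp(−T/(d−1))). -/

import Mathlib

noncomputable section

open MeasureTheory Real
open scoped ENNReal

namespace KacJL

instance matrixMeasurableSpace {m n : Type*} : MeasurableSpace (Matrix m n ℝ) :=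
  inferInstanceAs (MeasurableSpace (m → n → ℝ))

/-- The rotation by angle `θ` in the `(i,j)` coordinate plane of `ℝ^d`. -/
def rotM (d : ℕ) (i j : Fin d) (θ : ℝ) : Matrix (Fin d) (Fin d) ℝ :=
  Matrix.of fun k l =>
    if k = i ∧ l = i then Real.cos θ
    else if k = i ∧ l = j then -Real.sin θ
    else if k = j ∧ l = i then Real.sin θ
    else if k = j ∧ l = j then Real.cos θ
    else if k = l then 1 else 0

/-- The uniform distribution on pairs of distinct coordinates in `Fin d`. -/
def pairUniform (d : ℕ) : Measure (Fin d × Fin d) :=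
  ((d * (d - 1) : ℕ) : ℝ≥0∞)⁻¹ •
    (Measure.count.restrict {p : Fin d × Fin d | p.1 ≠ p.2})

/-- The uniform distribution on `[0, 2π)`. -/
def angleUniform : Measure ℝ :=
  (ENNReal.ofReal (2 * Real.pi))⁻¹ • (volume.restrict (Set.Ico 0 (2 * Real.pi)))

/-- The distribution of the update variables of one step of the `q`-Kac walk. -/
def qKacParam (d : ℕ) (q : Measure ℝ) : Measure ((Fin d × Fin d) × ℝ) :=
  (pairUniform d).prod q

/-- The product `R_{i_T,j_T,θ_T} ⋯ R_{i_1,j_1,θ_1}` of the rotations determined by the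
update variables `ω`. -/
def kacMatrix {d T : ℕ} (ω : Fin T → (Fin d × Fin d) × ℝ) : Matrix (Fin d) (Fin d) ℝ :=
  ((List.ofFn fun t => rotM d (ω t).1.1 (ω t).1.2 (ω t).2).reverse).prod

/-- The law of the `q`-Kac walk of length `T` on `ℝ^d`. -/
def qKacMeasure (d T : ℕ) (q : Measure ℝ) : Measure (Matrix (Fin d) (Fin d) ℝ) :=
  Measure.map kacMatrix (Measure.pi fun _ : Fin T => qKacParam d q)

/-- Reduction of a real number modulo `2π` to `[0, 2π)`. -/
def mod2pi (x : ℝ) : ℝ := 2 * Real.pi * Int.fract (x / (2 * Real.pi))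

/-- The uniform distribution on sign vectors `ξ ∈ {±1}^d` conditioned on `∏ i ξ_i = 1`. -/
def signMeasure (d : ℕ) : Measure (Fin d → ℝ) :=
  ((2 ^ (d - 1) : ℕ) : ℝ≥0∞)⁻¹ •
    (Measure.count.restrict
      {v : Fin d → ℝ | (∀ i, v i = 1 ∨ v i = -1) ∧ ∏ i, v i = 1})

/-- The total variation distance between two measures. -/
def tvDist {α : Type*} [MeasurableSpace α] (μ ν : Measure α) : ℝ :=
  ⨆ s : {s : Set α // MeasurableSet s}, |(μ s).toReal - (ν s).toReal|

/-- sign flip of the coordinates `i` and `j` (trivial when `i = j`). -/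
def flip2 {d : ℕ} (i j : Fin d) : Fin d → ℝ :=
  Pi.mulSingle i (-1 : ℝ) * Pi.mulSingle j (-1 : ℝ)

lemma mulSingle_sign {d : ℕ} (i k : Fin d) :
    (Pi.mulSingle i (-1 : ℝ) : Fin d → ℝ) k = if k = i then -1 else 1 := by
  simp [Pi.mulSingle_apply]

lemma flip2_apply {d : ℕ} (i j k : Fin d) :
    flip2 i j k = (if k = i then -1 else 1) * (if k = j then -1 else 1) := by
  simp [flip2, Pi.mulSingle_apply]

lemma flip2_sign {d : ℕ} (i j k : Fin d) : flip2 i j k = 1 ∨ flip2 i j k = -1 := by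
  rw [flip2_apply]; split_ifs <;> simp

lemma kacMatrix_succ {d T : ℕ} (ω : Fin (T + 1) → (Fin d × Fin d) × ℝ) :
    kacMatrix ω = kacMatrix (fun t => ω t.succ) * rotM d (ω 0).1.1 (ω 0).1.2 (ω 0).2 := by
  simp [kacMatrix, List.ofFn_succ]

lemma rotM_conj {d : ℕ} (i j : Fin d) (θ : ℝ) (ξ : Fin d → ℝ)
    (hξ : ∀ i, ξ i = 1 ∨ ξ i = -1) :
    Matrix.diagonal ξ * rotM d i j θ * Matrix.diagonal ξ =
      rotM d i j (if ξ i = ξ j then θ else -θ) := by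
  ext k l
  rw [Matrix.mul_diagonal, Matrix.diagonal_mul]
  simp only [rotM, Matrix.of_apply]
  have hk := hξ k
  have hl := hξ l
  have hi := hξ i
  have hj := hξ j
  by_cases h : ξ i = ξ j
  · simp only [h, if_true]
    split_ifs <;> rcases hk with hk | hk <;> rcases hl with hl | hl <;> grind
  · simp only [h, if_false, Real.cos_neg, Real.sin_neg]
    split_ifs <;> rcases hk with hk | hk <;> rcases hl with hl | hl <;> grind

lemma diag_sq {d : ℕ} (ξ : Fin d → ℝ) (hξ : ∀ i, ξ i = 1 ∨ ξ i = -1) :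
    Matrix.diagonal ξ * Matrix.diagonal ξ = 1 := by
  rw [Matrix.diagonal_mul_diagonal, ← Matrix.diagonal_one]
  congr 1; ext i; rcases hξ i with h | h <;> simp [h]

lemma rotM_flip {d : ℕ} (i j : Fin d) (hij : i ≠ j) (θ : ℝ) :
    rotM d i j (θ + Real.pi) = rotM d i j θ * Matrix.diagonal (flip2 i j) := by
  ext k l
  rw [Matrix.mul_diagonal, flip2_apply]
  simp only [rotM, Matrix.of_apply, Real.cos_add_pi, Real.sin_add_pi]
  split_ifs <;> grind

lemma mod2pi_eq (x : ℝ) : mod2pi x = x - (⌊x / (2 * Real.pi)⌋ : ℤ) * (2 * Real.pi) := by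
  have : (2 * Real.pi) ≠ 0 := by positivity
  unfold mod2pi Int.fract
  field_simp

lemma rotM_mod2pi {d : ℕ} (i j : Fin d) (θ : ℝ) : rotM d i j (mod2pi θ) = rotM d i j θ := by
  unfold rotM
  rw [mod2pi_eq, Real.cos_sub_int_mul_two_pi, Real.sin_sub_int_mul_two_pi]

lemma rotM_mod2pi_add {d : ℕ} (i j : Fin d) (θ a : ℝ) :
    rotM d i j (mod2pi θ + a) = rotM d i j (θ + a) := by
  unfold rotM
  rw [mod2pi_eq, show ∀ b c : ℝ, θ - b * c + a = θ + a - b * c by intros; ring,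
    Real.cos_sub_int_mul_two_pi, Real.sin_sub_int_mul_two_pi]

lemma measurable_mod2pi : Measurable mod2pi := by
  unfold mod2pi
  exact (measurable_fract.comp (measurable_id.div_const _)).const_mul _

/-- Sign vectors `ξ` such that multiplying by `D_ξ` amounts to a coordinatewise
measure-preserving change of the angles, the edges being fixed. -/
def edgeInv {d T : ℕ} (q : Measure ℝ) (e : Fin T → Fin d × Fin d) : Submonoid (Fin d → ℝ) where
  carrier := {ξ | ∃ f : Fin T → ℝ → ℝ, (∀ t, MeasurePreserving (f t) q q) ∧
    ∀ θ : Fin T → ℝ, kacMatrix (fun t => (e t, f t (θ t))) =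
      kacMatrix (fun t => (e t, θ t)) * Matrix.diagonal ξ}
  one_mem' := ⟨fun _ => id, fun _ => MeasurePreserving.id q, fun θ => by
    simp [show (Matrix.diagonal (1 : Fin d → ℝ)) = 1 from Matrix.diagonal_one]⟩
  mul_mem' := by
    rintro a b ⟨f, hf, hf'⟩ ⟨g, hg, hg'⟩
    refine ⟨fun t => g t ∘ f t, fun t => (hg t).comp (hf t), fun θ => ?_⟩
    have h1 := hg' (fun t => f t (θ t))
    simp only [Function.comp] at *
    rw [h1, hf', Matrix.mul_assoc, Matrix.diagonal_mul_diagonal]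
    rfl

lemma mem_edgeInv {d T : ℕ} (q : Measure ℝ) (e : Fin T → Fin d × Fin d) (ξ : Fin d → ℝ) :
    ξ ∈ edgeInv q e ↔ ∃ f : Fin T → ℝ → ℝ, (∀ t, MeasurePreserving (f t) q q) ∧
    ∀ θ : Fin T → ℝ, kacMatrix (fun t => (e t, f t (θ t))) =
      kacMatrix (fun t => (e t, θ t)) * Matrix.diagonal ξ := Iff.rfl

lemma flip2_self {d : ℕ} (i : Fin d) : flip2 i i = 1 := by
  ext k; rw [flip2_apply]; split_ifs <;> simp

lemma flip_mem_edgeInv {d : ℕ} (q : Measure ℝ)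
    (hneg : Measure.map (fun θ => mod2pi (-θ)) q = q)
    (hshift : Measure.map (fun θ => mod2pi (θ + Real.pi / 2)) q = q) (T : ℕ)
    (e : Fin T → Fin d × Fin d) (t : Fin T) :
    flip2 (e t).1 (e t).2 ∈ edgeInv q e := by
  have mneg : MeasurePreserving (fun θ => mod2pi (-θ)) q q :=
    ⟨measurable_mod2pi.comp measurable_neg, hneg⟩
  have mshift : MeasurePreserving (fun θ => mod2pi (θ + Real.pi / 2)) q q :=
    ⟨measurable_mod2pi.comp (measurable_id.add_const _), hshift⟩
  induction T with
  | zero => exact t.elim0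
  | succ T ih =>
    refine Fin.cases ?_ (fun t => ?_) t
    · by_cases hij : (e 0).1 = (e 0).2
      · rw [hij, flip2_self]; exact one_mem _
      · refine ⟨Fin.cons ((fun θ => mod2pi (θ + Real.pi / 2)) ∘ (fun θ => mod2pi (θ + Real.pi / 2)))
          (fun _ => id), ?_, fun θ => ?_⟩
        · intro t
          refine Fin.cases ?_ (fun t => ?_) t
          · exact mshift.comp mshift
          · exact MeasurePreserving.id q
        · rw [kacMatrix_succ, kacMatrix_succ, Matrix.mul_assoc, ← rotM_flip _ _ hij]
          simp only [Fin.cons_succ, Fin.cons_zero, id, Function.comp]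
          rw [rotM_mod2pi, rotM_mod2pi_add]
          congr 2; ring
    · obtain ⟨f, hf, hf'⟩ := (mem_edgeInv _ _ _).1 (ih (fun t => e t.succ) t)
      set ξ := flip2 (e t.succ).1 (e t.succ).2 with hξ
      have hs : ∀ i, ξ i = 1 ∨ ξ i = -1 := flip2_sign _ _
      refine ⟨Fin.cons (if ξ (e 0).1 = ξ (e 0).2 then id else (fun θ => mod2pi (-θ))) f,
        ?_, fun θ => ?_⟩
      · intro t
        refine Fin.cases ?_ (fun t => ?_) t
        · simp only [Fin.cons_zero]; split_ifs
          · exact MeasurePreserving.id q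
          · exact mneg
        · simpa using hf t
      · rw [kacMatrix_succ, kacMatrix_succ]
        simp only [Fin.cons_succ, Fin.cons_zero]
        rw [hf' (fun t => θ t.succ)]
        have h2 : rotM d (e 0).1 (e 0).2 ((if ξ (e 0).1 = ξ (e 0).2 then id
            else (fun θ => mod2pi (-θ))) (θ 0)) =
            Matrix.diagonal ξ * rotM d (e 0).1 (e 0).2 (θ 0) * Matrix.diagonal ξ := by
          rw [rotM_conj _ _ _ _ hs]
          split_ifs
          · rfl
          · rw [rotM_mod2pi]
        rw [h2, Matrix.mul_assoc, Matrix.mul_assoc (Matrix.diagonal ξ),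
          ← Matrix.mul_assoc (Matrix.diagonal ξ) (Matrix.diagonal ξ), diag_sq _ hs,
          Matrix.one_mul, Matrix.mul_assoc]

/-- No small nonempty set of coordinates is closed under the edges. -/
def good {d T : ℕ} (e : Fin T → Fin d × Fin d) : Prop :=
  ∀ S : Finset (Fin d), S.Nonempty → 2 * S.card ≤ d → ∃ t, ¬ ((e t).1 ∈ S ↔ (e t).2 ∈ S)

lemma flip2_comm {d : ℕ} (i j : Fin d) : flip2 i j = flip2 j i := mul_comm _ _

lemma flip2_mul {d : ℕ} (i j k : Fin d) : flip2 i j * flip2 j k = flip2 i k := by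
  ext l; simp only [Pi.mul_apply, flip2_apply]; split_ifs <;> simp

lemma flip_mem_of_good {d T : ℕ} (q : Measure ℝ)
    (e : Fin T → Fin d × Fin d) (he : good e)
    (h : ∀ t, flip2 (e t).1 (e t).2 ∈ edgeInv q e) (i j : Fin d) :
    flip2 i j ∈ edgeInv q e := by
  classical
  set S : Finset (Fin d) := Finset.univ.filter (fun k => flip2 i k ∈ edgeInv q e) with hS
  have hcl : ∀ t, ((e t).1 ∈ S ↔ (e t).2 ∈ S) := by
    intro t
    simp only [hS, Finset.mem_filter, Finset.mem_univ, true_and]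
    constructor
    · intro h1
      have := mul_mem h1 (h t)
      rwa [flip2_mul] at this
    · intro h1
      have := mul_mem h1 (flip2_comm (e t).1 (e t).2 ▸ h t)
      rwa [flip2_mul] at this
  have hi : i ∈ S := by simp [hS, flip2_self, one_mem]
  by_contra hj
  have hj : j ∉ S := by simpa [hS] using hj
  have hc := Finset.card_add_card_compl S
  rw [Fintype.card_fin] at hc
  by_cases hcard : 2 * S.card ≤ d
  · obtain ⟨t, ht⟩ := he S ⟨i, hi⟩ hcard
    exact ht (hcl t)
  · obtain ⟨t, ht⟩ := he Sᶜ ⟨j, by simpa using hj⟩ (by omega)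
    apply ht
    simp only [Finset.mem_compl]
    exact not_congr (hcl t)

lemma even_mem_of_good {d T : ℕ} (q : Measure ℝ)
    (e : Fin T → Fin d × Fin d) (he : good e)
    (h : ∀ t, flip2 (e t).1 (e t).2 ∈ edgeInv q e) (ξ : Fin d → ℝ)
    (hξ : ∀ i, ξ i = 1 ∨ ξ i = -1) (hp : ∏ i, ξ i = 1) :
    ξ ∈ edgeInv q e := by
  classical
  rcases Nat.eq_zero_or_pos d with rfl | hd
  · rw [Subsingleton.elim ξ 1]; exact one_mem _
  let o : Fin d := ⟨0, hd⟩
  have key : ξ = ∏ i, ((Pi.mulSingle o (ξ i) : Fin d → ℝ) * Pi.mulSingle i (ξ i)) := by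
    rw [Finset.prod_mul_distrib, Finset.univ_prod_mulSingle]
    have : ∏ i, (Pi.mulSingle o (ξ i) : Fin d → ℝ) = 1 := by
      ext k
      rw [Finset.prod_apply]
      by_cases hk : k = o
      · subst hk; simpa using hp
      · simp [Pi.mulSingle_apply, hk]
    rw [this, one_mul]
  rw [key]
  refine Submonoid.prod_mem _ fun i _ => ?_
  rcases hξ i with h1 | h1
  · rw [h1]; simp [one_mem]
  · rw [h1]; exact flip_mem_of_good q e he h o i

lemma measurable_matrix_iff {α : Type*} [MeasurableSpace α] {d : ℕ}
    {F : α → Matrix (Fin d) (Fin d) ℝ} :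
    Measurable F ↔ ∀ k l, Measurable fun a => F a k l := by
  constructor
  · intro h k l
    exact (measurable_pi_apply l).comp ((measurable_pi_apply k).comp h)
  · intro h
    refine measurable_pi_lambda _ fun k => measurable_pi_lambda _ fun l => h k l

lemma measurable_matrix_mul {α : Type*} [MeasurableSpace α] {d : ℕ}
    {F G : α → Matrix (Fin d) (Fin d) ℝ} (hF : Measurable F) (hG : Measurable G) :
    Measurable fun a => F a * G a := by
  rw [measurable_matrix_iff] at *
  intro k l
  simp only [Matrix.mul_apply]
  exact Finset.measurable_sum _ fun i _ => (hF k i).mul (hG i l)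

lemma measurable_diagonal {d : ℕ} :
    Measurable (fun v : Fin d → ℝ => (Matrix.diagonal v : Matrix (Fin d) (Fin d) ℝ)) := by
  rw [measurable_matrix_iff]
  intro k l
  by_cases h : k = l
  · subst h; simpa using measurable_pi_apply k
  · simp [Matrix.diagonal_apply_ne _ h]

lemma measurable_rotM {d : ℕ} :
    Measurable (fun p : (Fin d × Fin d) × ℝ => rotM d p.1.1 p.1.2 p.2) := by
  refine measurable_from_prod_countable_right fun e => ?_
  rw [measurable_matrix_iff]
  intro k l
  simp only [rotM, Matrix.of_apply]
  split_ifs <;> fun_prop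

lemma measurable_kacMatrix {d T : ℕ} :
    Measurable (kacMatrix : (Fin T → (Fin d × Fin d) × ℝ) → Matrix (Fin d) (Fin d) ℝ) := by
  induction T with
  | zero =>
    have : (kacMatrix : (Fin 0 → (Fin d × Fin d) × ℝ) → Matrix (Fin d) (Fin d) ℝ) =
        fun _ => 1 := by
      ext ω; simp [kacMatrix]
    rw [this]; exact measurable_const
  | succ T ih =>
    have : (kacMatrix : (Fin (T + 1) → (Fin d × Fin d) × ℝ) → Matrix (Fin d) (Fin d) ℝ) =
        fun ω => kacMatrix (fun t => ω t.succ) * rotM d (ω 0).1.1 (ω 0).1.2 (ω 0).2 :=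
      funext kacMatrix_succ
    rw [this]
    refine measurable_matrix_mul (ih.comp ?_) (measurable_rotM.comp (measurable_pi_apply 0))
    exact measurable_pi_lambda _ fun t => measurable_pi_apply _

lemma pairUniform_apply {d : ℕ} (s : Finset (Fin d × Fin d)) :
    pairUniform d (s : Set (Fin d × Fin d)) =
      ((d * (d - 1) : ℕ) : ℝ≥0∞)⁻¹ * ((s.filter (fun p => p.1 ≠ p.2)).card : ℝ≥0∞) := by
  classical
  unfold pairUniform
  rw [Measure.smul_apply, Measure.restrict_apply (Set.toFinite _).measurableSet, smul_eq_mul]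
  congr 1
  rw [← Measure.count_apply_finset]
  congr 1
  ext p; simp

instance pairUniform_finite (d : ℕ) : IsFiniteMeasure (pairUniform d) := by
  classical
  constructor
  have := pairUniform_apply (d := d) Finset.univ
  rw [Finset.coe_univ] at this
  rw [this]
  have hc : (Finset.univ.filter (fun p : Fin d × Fin d => p.1 ≠ p.2)).card = d * (d - 1) := by
    have : (Finset.univ.filter (fun p : Fin d × Fin d => p.1 ≠ p.2)) =
      (Finset.univ : Finset (Fin d)).offDiag := by ext p; simp
    rw [this, Finset.offDiag_card]; simp [Nat.mul_sub]
  rw [hc]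
  refine lt_of_le_of_lt (ENNReal.inv_mul_le_one _) ENNReal.one_lt_top

lemma even_card {d : ℕ} :
    Measure.count {v : Fin d → ℝ | (∀ i, v i = 1 ∨ v i = -1) ∧ ∏ i, v i = 1} =
      ((2 ^ (d - 1) : ℕ) : ℝ≥0∞) := by
  classical
  set S : Finset (Fin d → ℝ) := Fintype.piFinset fun _ => ({1, -1} : Finset ℝ) with hS
  have hmem : ∀ v, v ∈ S ↔ ∀ i, v i = 1 ∨ v i = -1 := by intro v; simp [hS]
  have h1 : {v : Fin d → ℝ | (∀ i, v i = 1 ∨ v i = -1) ∧ ∏ i, v i = 1} =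
      ((S.filter fun v => ∏ i, v i = 1 : Finset (Fin d → ℝ)) : Set (Fin d → ℝ)) := by
    ext v; simp [hmem]
  rw [h1, Measure.count_apply_finset]
  norm_cast
  rcases Nat.eq_zero_or_pos d with rfl | hd
  · have : (S.filter fun v => ∏ i, v i = 1) = {default} := by
      ext v; simp [hmem, Subsingleton.elim v default]
    rw [this]; simp
  have h0 : ∑ v ∈ S, ∏ i, v i = 0 := by
    rw [hS, ← Finset.prod_univ_sum (fun _ => ({1, -1} : Finset ℝ)) (fun _ x => x)]
    refine Finset.prod_eq_zero (Finset.mem_univ ⟨0, hd⟩) ?_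
    rw [Finset.sum_pair (by norm_num)]; norm_num
  have hcard : S.card = 2 ^ d := by
    rw [hS, Fintype.card_piFinset]
    simp [Finset.card_pair (show (1 : ℝ) ≠ -1 by norm_num)]
  have h2 : ∑ v ∈ S, (1 + ∏ i, v i) = ∑ v ∈ S, (if ∏ i, v i = 1 then (2 : ℝ) else 0) := by
    refine Finset.sum_congr rfl fun v hv => ?_
    have hv := (hmem v).1 hv
    have : ∏ i, v i = 1 ∨ ∏ i, v i = -1 := by
      refine Finset.prod_induction v (fun x => x = 1 ∨ x = -1) ?_ (Or.inl rfl) fun i _ => hv i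
      rintro a b (rfl | rfl) (rfl | rfl) <;> simp
    rcases this with h | h <;> rw [h] <;> norm_num
  rw [Finset.sum_add_distrib, h0, ← Finset.sum_filter] at h2
  simp only [Finset.sum_const, hcard, nsmul_eq_mul] at h2
  obtain ⟨n, rfl⟩ : ∃ n, d = n + 1 := ⟨d - 1, by omega⟩
  push_cast [pow_succ] at h2
  have h3 : ((S.filter fun v => ∏ i, v i = 1).card : ℝ) = 2 ^ n := by linarith
  simp only [Nat.add_sub_cancel]
  exact_mod_cast h3

lemma measurableSet_even {d : ℕ} :
    MeasurableSet {v : Fin d → ℝ | (∀ i, v i = 1 ∨ v i = -1) ∧ ∏ i, v i = 1} := by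
  have h := even_card (d := d)
  refine Set.Finite.measurableSet ?_
  by_contra hinf
  rw [Measure.count_apply_infinite hinf] at h
  exact ENNReal.natCast_ne_top _ h.symm

instance signMeasure_prob (d : ℕ) : IsProbabilityMeasure (signMeasure d) := by
  constructor
  unfold signMeasure
  rw [Measure.smul_apply, Measure.restrict_apply MeasurableSet.univ, Set.univ_inter, even_card,
    smul_eq_mul]
  refine ENNReal.inv_mul_cancel ?_ (ENNReal.natCast_ne_top _)
  simp

lemma signMeasure_ae (d : ℕ) :
    ∀ᵐ v ∂(signMeasure d), (∀ i, v i = 1 ∨ v i = -1) ∧ ∏ i, v i = 1 := by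
  unfold signMeasure
  refine Measure.ae_smul_measure ?_ _
  exact ae_restrict_mem measurableSet_even

lemma law_apply {d T : ℕ} (q : Measure ℝ) [IsProbabilityMeasure q] (A : Set (Matrix (Fin d) (Fin d) ℝ))
    (hA : MeasurableSet A) (D : Matrix (Fin d) (Fin d) ℝ) :
    (Measure.pi fun _ : Fin T => qKacParam d q) {ω | kacMatrix ω * D ∈ A} =
      ∫⁻ e, (Measure.pi fun _ : Fin T => q) {θ | kacMatrix (fun t => (e t, θ t)) * D ∈ A}
        ∂(Measure.pi fun _ : Fin T => pairUniform d) := by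
  have hm : Measurable fun ω : Fin T → (Fin d × Fin d) × ℝ => kacMatrix ω * D :=
    measurable_matrix_mul measurable_kacMatrix measurable_const
  have hp := (measurePreserving_arrowProdEquivProdArrow (Fin d × Fin d) ℝ (Fin T)
    (fun _ => pairUniform d) (fun _ => q)).symm
  have := hp.measure_preimage (s := {ω | kacMatrix ω * D ∈ A}) (hm hA).nullMeasurableSet
  unfold qKacParam
  have hms : MeasurableSet {ω : Fin T → (Fin d × Fin d) × ℝ | kacMatrix ω * D ∈ A} := hm hA
  rw [← this, Measure.prod_apply (hp.measurable hms)]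
  rfl

lemma inv_apply {d T : ℕ} (q : Measure ℝ) [IsProbabilityMeasure q]
    (A : Set (Matrix (Fin d) (Fin d) ℝ)) (hA : MeasurableSet A) (e : Fin T → Fin d × Fin d)
    (ξ : Fin d → ℝ) (h : ξ ∈ edgeInv q e) :
    (Measure.pi fun _ : Fin T => q) {θ | kacMatrix (fun t => (e t, θ t)) * Matrix.diagonal ξ ∈ A} =
    (Measure.pi fun _ : Fin T => q) {θ | kacMatrix (fun t => (e t, θ t)) * 1 ∈ A} := by
  obtain ⟨f, hf, hf'⟩ := h
  have hm : Measurable fun θ : Fin T → ℝ => kacMatrix (fun t => (e t, θ t)) := by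
    refine measurable_kacMatrix.comp ?_
    fun_prop
  have hp := measurePreserving_pi (fun _ : Fin T => q) (fun _ : Fin T => q) hf
  have := hp.measure_preimage (s := {θ | kacMatrix (fun t => (e t, θ t)) * 1 ∈ A})
    (by simp only [mul_one]; exact (hm hA).nullMeasurableSet)
  rw [← this]
  congr 1
  ext θ
  simp [hf']

lemma bad_bound {d T : ℕ} (q : Measure ℝ) [IsProbabilityMeasure q]
    (hneg : Measure.map (fun θ => mod2pi (-θ)) q = q)
    (hshift : Measure.map (fun θ => mod2pi (θ + Real.pi / 2)) q = q)
    (A : Set (Matrix (Fin d) (Fin d) ℝ)) (hA : MeasurableSet A) (ξ : Fin d → ℝ)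
    (hξ : (∀ i, ξ i = 1 ∨ ξ i = -1) ∧ ∏ i, ξ i = 1) :
    (Measure.pi fun _ : Fin T => qKacParam d q) {ω | kacMatrix ω * Matrix.diagonal ξ ∈ A} ≤
      (Measure.pi fun _ : Fin T => qKacParam d q) {ω | kacMatrix ω * 1 ∈ A} +
      (Measure.pi fun _ : Fin T => pairUniform d) {e | ¬ good e} ∧
    (Measure.pi fun _ : Fin T => qKacParam d q) {ω | kacMatrix ω * 1 ∈ A} ≤
      (Measure.pi fun _ : Fin T => qKacParam d q) {ω | kacMatrix ω * Matrix.diagonal ξ ∈ A} +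
      (Measure.pi fun _ : Fin T => pairUniform d) {e | ¬ good e} := by
  classical
  have hB : MeasurableSet {e : Fin T → Fin d × Fin d | ¬ good e} := (Set.toFinite _).measurableSet
  rw [law_apply q A hA, law_apply q A hA, ← lintegral_indicator_one hB,
    ← lintegral_add_right _ (measurable_one.indicator hB),
    ← lintegral_add_right _ (measurable_one.indicator hB)]
  constructor <;> refine lintegral_mono fun e => ?_
  all_goals
    by_cases he : good e
    · rw [inv_apply q A hA e ξ (even_mem_of_good q e he
        (flip_mem_edgeInv q hneg hshift T e) ξ hξ.1 hξ.2)]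
      exact le_self_add
    · have h1 : ({e : Fin T → Fin d × Fin d | ¬ good e}).indicator (1 : (Fin T → Fin d × Fin d) → ℝ≥0∞) e = 1 := by
        simp [he]
      simp only [h1]
      exact prob_le_one.trans le_add_self

lemma tv_le {d T : ℕ} (q : Measure ℝ) [IsProbabilityMeasure q]
    (hneg : Measure.map (fun θ => mod2pi (-θ)) q = q)
    (hshift : Measure.map (fun θ => mod2pi (θ + Real.pi / 2)) q = q) :
    tvDist (qKacMeasure d T q)
        (Measure.map
          (fun z : (Fin T → (Fin d × Fin d) × ℝ) × (Fin d → ℝ) =>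
            kacMatrix z.1 * Matrix.diagonal z.2)
          ((Measure.pi fun _ : Fin T => qKacParam d q).prod (signMeasure d))) ≤
      ((Measure.pi fun _ : Fin T => pairUniform d) {e | ¬ good e}).toReal := by
  refine Real.iSup_le ?_ ENNReal.toReal_nonneg
  rintro ⟨A, hA⟩
  have : IsFiniteMeasure (qKacParam d q) := by unfold qKacParam; infer_instance
  have hm : Measurable (fun z : (Fin T → (Fin d × Fin d) × ℝ) × (Fin d → ℝ) =>
            kacMatrix z.1 * Matrix.diagonal z.2) :=
    measurable_matrix_mul (measurable_kacMatrix.comp measurable_fst)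
      (measurable_diagonal.comp measurable_snd)
  have e1 : qKacMeasure d T q A =
      (Measure.pi fun _ : Fin T => qKacParam d q) {ω | kacMatrix ω * 1 ∈ A} := by
    unfold qKacMeasure
    rw [Measure.map_apply measurable_kacMatrix hA]
    simp [Set.preimage]
  simp only
  rw [Measure.map_apply hm hA, Measure.prod_apply_symm (hm hA), e1]
  set a := (Measure.pi fun _ : Fin T => qKacParam d q) {ω | kacMatrix ω * 1 ∈ A} with ha
  set c := (Measure.pi fun _ : Fin T => pairUniform d) {e | ¬ good e} with hc
  set b := ∫⁻ y, (Measure.pi fun _ : Fin T => qKacParam d q)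
    ((fun x => (x, y)) ⁻¹' ((fun z : (Fin T → (Fin d × Fin d) × ℝ) × (Fin d → ℝ) =>
            kacMatrix z.1 * Matrix.diagonal z.2) ⁻¹' A)) ∂(signMeasure d) with hb
  have hat : a ≠ ⊤ := measure_ne_top _ _
  have hct : c ≠ ⊤ := measure_ne_top _ _
  have hba : b ≤ a + c := by
    calc b ≤ ∫⁻ y, (a + c) ∂(signMeasure d) := by
          refine lintegral_mono_ae ?_
          filter_upwards [signMeasure_ae d] with ξ hξ
          exact (bad_bound q hneg hshift A hA ξ hξ).1
      _ = a + c := by simp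
  have hab : a ≤ b + c := by
    calc a = ∫⁻ y, a ∂(signMeasure d) := by simp
      _ ≤ ∫⁻ y, ((Measure.pi fun _ : Fin T => qKacParam d q)
    ((fun x => (x, y)) ⁻¹' ((fun z : (Fin T → (Fin d × Fin d) × ℝ) × (Fin d → ℝ) =>
            kacMatrix z.1 * Matrix.diagonal z.2) ⁻¹' A)) + c) ∂(signMeasure d) := by
          refine lintegral_mono_ae ?_
          filter_upwards [signMeasure_ae d] with ξ hξ
          exact (bad_bound q hneg hshift A hA ξ hξ).2
      _ = b + c := by rw [lintegral_add_right _ measurable_const]; simp [hb]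
  have hbt : b ≠ ⊤ := ne_top_of_le_ne_top (ENNReal.add_ne_top.2 ⟨hat, hct⟩) hba
  have h1 := ENNReal.toReal_mono (ENNReal.add_ne_top.2 ⟨hat, hct⟩) hba
  have h2 := ENNReal.toReal_mono (ENNReal.add_ne_top.2 ⟨hbt, hct⟩) hab
  rw [ENNReal.toReal_add hat hct] at h1
  rw [ENNReal.toReal_add hbt hct] at h2
  rw [abs_le]; constructor <;> linarith

lemma noncross {d : ℕ} (hd : 2 ≤ d) (T : ℕ) (S : Finset (Fin d)) (hS : 2 * S.card ≤ d) :
    ((Measure.pi fun _ : Fin T => pairUniform d)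
      {e | ∀ t, ((e t).1 ∈ S ↔ (e t).2 ∈ S)}).toReal ≤
      Real.exp (-(T : ℝ) / ((d : ℝ) - 1)) ^ S.card := by
  classical
  have h1 : {e : Fin T → Fin d × Fin d | ∀ t, ((e t).1 ∈ S ↔ (e t).2 ∈ S)} =
      Set.univ.pi fun _ => ((Finset.univ.filter fun p : Fin d × Fin d => (p.1 ∈ S ↔ p.2 ∈ S) :
        Finset (Fin d × Fin d)) : Set (Fin d × Fin d)) := by
    ext e; simp
  have hcard : ((Finset.univ.filter fun p : Fin d × Fin d => (p.1 ∈ S ↔ p.2 ∈ S)).filter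
      (fun p => p.1 ≠ p.2)).card = S.offDiag.card + Sᶜ.offDiag.card := by
    rw [← Finset.card_union_of_disjoint]
    · congr 1; ext p; simp; tauto
    · rw [Finset.disjoint_left]; intro p; simp; tauto
  have hc := Finset.card_add_card_compl S
  rw [Fintype.card_fin] at hc
  rw [h1, Measure.pi_pi, Finset.prod_const, Finset.card_univ, Fintype.card_fin, pairUniform_apply,
    hcard, ENNReal.toReal_pow, ENNReal.toReal_mul, ENNReal.toReal_inv, ENNReal.toReal_natCast,
    ENNReal.toReal_natCast, Finset.offDiag_card, Finset.offDiag_card]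
  set k := S.card
  set m := Sᶜ.card
  have hd' : (2 : ℝ) ≤ d := by exact_mod_cast hd
  have hk' : 2 * (k : ℝ) ≤ d := by exact_mod_cast hS
  have hm' : (m : ℝ) = d - k := by rw [← hc]; push_cast; ring
  have hk0 : (0 : ℝ) ≤ k := Nat.cast_nonneg _
  have hpos : (0 : ℝ) < d - 1 := by linarith
  have e2 : ((d * (d - 1) : ℕ) : ℝ) = d * (d - 1) := by
    rw [Nat.cast_mul, Nat.cast_sub (by omega)]; simp
  have e3 : ((k * k - k + (m * m - m) : ℕ) : ℝ) = k * k - k + (m * m - m) := by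
    rw [Nat.cast_add, Nat.cast_sub (Nat.le_mul_self k), Nat.cast_sub (Nat.le_mul_self m)]
    push_cast; ring
  have hle : ((d * (d - 1) : ℕ) : ℝ)⁻¹ * ((k * k - k + (m * m - m) : ℕ) : ℝ) ≤
      Real.exp (-(k : ℝ) / ((d : ℝ) - 1)) := by
    refine le_trans ?_ (Real.add_one_le_exp _)
    rw [e2, e3, hm', inv_mul_le_iff₀ (by positivity)]
    have : (d : ℝ) * (d - 1) * (-(k : ℝ) / (d - 1) + 1) = d * (d - 1) - d * k := by
      field_simp; ring
    rw [this]
    nlinarith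
  calc _ ≤ Real.exp (-(k : ℝ) / ((d : ℝ) - 1)) ^ T := pow_le_pow_left₀ (by positivity) hle T
    _ = _ := by
      rw [← Real.exp_nat_mul, ← Real.exp_nat_mul]; congr 1; ring

lemma bad_le {d : ℕ} (hd : 2 ≤ d) (T : ℕ)
    (hsmall : (d : ℝ) * Real.exp (-(T : ℝ) / ((d : ℝ) - 1)) < 1) :
    ((Measure.pi fun _ : Fin T => pairUniform d) {e | ¬ good e}).toReal ≤
      (d : ℝ) * Real.exp (-(T : ℝ) / ((d : ℝ) - 1)) /
        (1 - (d : ℝ) * Real.exp (-(T : ℝ) / ((d : ℝ) - 1))) := by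
  classical
  set x := Real.exp (-(T : ℝ) / ((d : ℝ) - 1)) with hx
  have hx0 : 0 < x := Real.exp_pos _
  set P : Measure (Fin T → Fin d × Fin d) := Measure.pi fun _ : Fin T => pairUniform d with hP
  set F : Finset (Finset (Fin d)) :=
    Finset.univ.filter (fun S => S.Nonempty ∧ 2 * S.card ≤ d) with hF
  have h1 : {e : Fin T → Fin d × Fin d | ¬ good e} =
      ⋃ S ∈ F, {e | ∀ t, ((e t).1 ∈ S ↔ (e t).2 ∈ S)} := by
    ext e
    simp [good, hF, and_assoc]
  have h2 : (P {e | ¬ good e}).toReal ≤ ∑ S ∈ F, x ^ S.card := by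
    rw [h1]
    refine (measureReal_biUnion_finset_le (μ := P) F _).trans ?_
    refine Finset.sum_le_sum fun S hS => ?_
    exact noncross hd T S (Finset.mem_filter.1 hS).2.2
  refine h2.trans ?_
  have h3 : ∑ S ∈ F, x ^ S.card ≤ ∑ k ∈ Finset.Icc 1 d, (d.choose k : ℝ) * x ^ k := by
    have hmap : ∀ S ∈ F, S.card ∈ Finset.Icc 1 d := by
      intro S hS
      have := (Finset.mem_filter.1 hS).2
      have h4 := this.1.card_pos
      rw [Finset.mem_Icc]; omega
    rw [← Finset.sum_fiberwise_of_maps_to hmap]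
    refine Finset.sum_le_sum fun k _ => ?_
    calc ∑ S ∈ F with S.card = k, x ^ S.card ≤
        ∑ S ∈ Finset.powersetCard k (Finset.univ : Finset (Fin d)), x ^ S.card := by
          refine Finset.sum_le_sum_of_subset_of_nonneg ?_ fun _ _ _ => by positivity
          intro S hS
          rw [Finset.mem_powersetCard]
          exact ⟨Finset.subset_univ _, (Finset.mem_filter.1 hS).2⟩
      _ = (d.choose k : ℝ) * x ^ k := by
          rw [Finset.sum_congr rfl fun S hS => by rw [(Finset.mem_powersetCard.1 hS).2],
            Finset.sum_const, Finset.card_powersetCard]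
          simp
  refine h3.trans ?_
  set y := (d : ℝ) * x with hy
  have hy0 : 0 ≤ y := by positivity
  have h4 : ∑ k ∈ Finset.Icc 1 d, (d.choose k : ℝ) * x ^ k ≤ ∑ k ∈ Finset.Icc 1 d, y ^ k := by
    refine Finset.sum_le_sum fun k _ => ?_
    rw [hy, mul_pow]
    gcongr
    exact_mod_cast Nat.choose_le_pow d k
  refine h4.trans ?_
  have h5 : ∑ k ∈ Finset.Icc 1 d, y ^ k = y * ∑ k ∈ Finset.range d, y ^ k := by
    rw [Finset.mul_sum]
    have h6 : Finset.Icc 1 d = Finset.Ico 1 (d + 1) := by ext; simp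
    rw [h6, Finset.sum_Ico_eq_sum_range]
    refine Finset.sum_congr (by simp) fun k _ => by rw [pow_add, pow_one]
  rw [h5, div_eq_mul_inv]
  refine mul_le_mul_of_nonneg_left ?_ hy0
  rw [← tsum_geometric_of_lt_one hy0 hsmall]
  exact (summable_geometric_of_lt_one hy0 hsmall).sum_le_tsum _ fun _ _ => by positivity

/-- **Lemma 2.4**: for a symmetric `q`-Kac walk, the law of `Q_T` is close in total
variation to the law of `Q_T D_ξ`, where `ξ` is a uniform sign vector conditioned on
having product `1`, independent of the walk. -/
theorem symmetric_kac_sign_invariance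
    (d T : ℕ) (q : Measure ℝ) [IsProbabilityMeasure q]
    (hsupp : q (Set.Ico 0 (2 * Real.pi))ᶜ = 0)
    (hneg : Measure.map (fun θ => mod2pi (-θ)) q = q)
    (hshift : Measure.map (fun θ => mod2pi (θ + Real.pi / 2)) q = q)
    (hsmall : (d : ℝ) * Real.exp (-(T : ℝ) / ((d : ℝ) - 1)) < 1) :
    tvDist (qKacMeasure d T q)
        (Measure.map
          (fun z : (Fin T → (Fin d × Fin d) × ℝ) × (Fin d → ℝ) =>
            kacMatrix z.1 * Matrix.diagonal z.2)
          ((Measure.pi fun _ : Fin T => qKacParam d q).prod (signMeasure d))) ≤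
      (d : ℝ) * Real.exp (-(T : ℝ) / ((d : ℝ) - 1)) /
        (1 - (d : ℝ) * Real.exp (-(T : ℝ) / ((d : ℝ) - 1))) := by
  refine (tv_le q hneg hshift).trans ?_
  by_cases hd : 2 ≤ d
  · exact bad_le hd T hsmall
  · have hd' : d = 0 ∨ d = 1 := by omega
    rcases hd' with rfl | rfl
    · have : {e : Fin T → Fin 0 × Fin 0 | ¬ good e} = ∅ := by
        ext e
        simp only [Set.mem_ofPred_eq, Set.mem_empty_iff_false, iff_false, not_not]
        rintro S ⟨i, -⟩
        exact i.elim0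
      rw [this]; simp
    · simp at hsmall

end KacJL
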